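/- arXiv:1808.10094 — 6 statements merged into one kernel-verified Lean document; each statement's English description precedes it below -/
import Mathlib

section
/- Let c > 0, g > 1, α < 0, β < 0, h > 0, I > 0, and let 0 < P_min ≤ P_max satisfy the high-PDR condition α·(h·P_min/I)^β ≥ (1−β)/β (since P ↦ α·(h·P/I)^β is increasing, this bound then holds for every P in the interval). Then the utility U(P) = −c·P^g + ln(1 + exp(α·(h·P/I)^β)) is strictly concave on [P_min, P_max]. -/
open Real

/-!
With `A = α (h / I) ^ β`, the packet delivery ratio is `f P = exp (A P ^ β)`, and
`f'' P = A β P ^ (β - 2) exp (A P ^ β) (A β P ^ β - (1 - β))`. As `A β > 0`, the sign of `f''` is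
that of the last factor, and the high-PDR condition says exactly that this factor is nonpositive
at `P_min`; being strictly decreasing in `P`, it is negative beyond `P_min`. So the packet delivery
ratio is itself strictly concave, and `log (1 + f)` inherits this because `log` is concave and
increasing. Adding the concave pricing term preserves strict concavity.
-/

section Convexity

variable {𝕜 E F G : Type*} [Semiring 𝕜] [PartialOrder 𝕜]
  [AddCommMonoid E] [SMul 𝕜 E]
  [AddCommMonoid F] [PartialOrder F] [SMul 𝕜 F]
  [AddCommMonoid G] [PartialOrder G] [SMul 𝕜 G]

lemma strictConcaveOn_comp_of_mapsTo {s : Set E} {t : Set F} {f : E → F} {g : F → G}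
    (hg : ConcaveOn 𝕜 t g) (hg_mono : StrictMonoOn g t) (hf : StrictConcaveOn 𝕜 s f)
    (hst : Set.MapsTo f s t) : StrictConcaveOn 𝕜 s (g ∘ f) := by
  refine ⟨hf.1, fun x hx y hy hxy a b ha hb hab => ?_⟩
  calc a • g (f x) + b • g (f y)
      ≤ g (a • f x + b • f y) := hg.2 (hst hx) (hst hy) ha.le hb.le hab
    _ < g (f (a • x + b • y)) :=
        hg_mono (hg.1 (hst hx) (hst hy) ha.le hb.le hab) (hst (hf.1 hx hy ha.le hb.le hab))
          (hf.2 hx hy hxy ha hb hab)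

lemma strictConcaveOn_of_hasDerivWithinAt2_neg {D : Set ℝ} (hD : Convex ℝ D) {f f' f'' : ℝ → ℝ}
    (hf : ContinuousOn f D)
    (hf' : ∀ x ∈ interior D, HasDerivWithinAt f (f' x) (interior D) x)
    (hf'' : ∀ x ∈ interior D, HasDerivWithinAt f' (f'' x) (interior D) x)
    (hf''_neg : ∀ x ∈ interior D, f'' x < 0) : StrictConcaveOn ℝ D f := by
  have hderiv : Set.EqOn (deriv f) f' (interior D) := deriv_eqOn isOpen_interior hf'
  have hanti : StrictAntiOn f' (interior D) := by
    refine strictAntiOn_of_hasDerivWithinAt_neg (f' := f'') hD.interior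
      (fun x hx => (hf'' x hx).continuousWithinAt) ?_ ?_ <;> rwa [interior_interior]
  exact (hanti.congr hderiv.symm).strictConcaveOn_of_deriv hD hf

end Convexity

section ExpMulRpow

variable {A p x : ℝ}

lemma hasDerivAt_exp_mul_rpow (hx : 0 < x) :
    HasDerivAt (fun y : ℝ => exp (A * y ^ p)) (exp (A * x ^ p) * (A * (p * x ^ (p - 1)))) x :=
  ((hasDerivAt_rpow_const (Or.inl hx.ne')).const_mul A).exp

lemma hasDerivAt_deriv_exp_mul_rpow (hx : 0 < x) :
    HasDerivAt (fun y : ℝ => exp (A * y ^ p) * (A * (p * y ^ (p - 1))))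
      (A * p * x ^ (p - 2) * exp (A * x ^ p) * (A * p * x ^ p - (1 - p))) x := by
  have hrpow : HasDerivAt (fun y : ℝ => A * (p * y ^ (p - 1)))
      (A * (p * ((p - 1) * x ^ (p - 1 - 1)))) x :=
    ((hasDerivAt_rpow_const (Or.inl hx.ne')).const_mul p).const_mul A
  have hsq : x ^ (p - 1) * x ^ (p - 1) = x ^ (p - 2) * x ^ p := by
    rw [← rpow_add hx, ← rpow_add hx]
    ring_nf
  have hexponent : p - 1 - 1 = p - 2 := by ring
  refine ((hasDerivAt_exp_mul_rpow hx).mul hrpow).congr_deriv ?_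
  rw [hexponent]
  linear_combination exp (A * x ^ p) * (A * p) ^ 2 * hsq

lemma strictConcaveOn_exp_mul_rpow {s : Set ℝ} (hs : Convex ℝ s) (hs_pos : s ⊆ Set.Ioi 0)
    (hAp : 0 < A * p) (hlt : ∀ x ∈ interior s, A * p * x ^ p < 1 - p) :
    StrictConcaveOn ℝ s (fun x : ℝ => exp (A * x ^ p)) := by
  have hpos : ∀ x ∈ interior s, 0 < x := fun x hx => hs_pos (interior_subset hx)
  refine strictConcaveOn_of_hasDerivWithinAt2_neg hs
    (fun x hx => (hasDerivAt_exp_mul_rpow (hs_pos hx)).continuousAt.continuousWithinAt)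
    (fun x hx => (hasDerivAt_exp_mul_rpow (hpos x hx)).hasDerivWithinAt)
    (fun x hx => (hasDerivAt_deriv_exp_mul_rpow (hpos x hx)).hasDerivWithinAt)
    (fun x hx => ?_)
  have hx_pos : 0 < x := hpos x hx
  exact mul_neg_of_pos_of_neg (by positivity) (sub_neg.2 (hlt x hx))

lemma strictConcaveOn_Ici_exp_mul_rpow_of_neg {a : ℝ} (ha : 0 < a) (hA : A < 0) (hp : p < 0)
    (hle : (1 - p) / p ≤ A * a ^ p) :
    StrictConcaveOn ℝ (Set.Ici a) (fun x : ℝ => exp (A * x ^ p)) := by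
  have hAp : 0 < A * p := mul_pos_of_neg_of_neg hA hp
  refine strictConcaveOn_exp_mul_rpow (convex_Ici a) (Set.Ici_subset_Ioi.2 ha) hAp
    fun x hx => ?_
  rw [interior_Ici] at hx
  calc A * p * x ^ p
      < A * p * a ^ p := mul_lt_mul_of_pos_left (rpow_lt_rpow_of_neg ha hx hp) hAp
    _ = A * a ^ p * p := by ring
    _ ≤ 1 - p := (div_le_iff_of_neg hp).1 hle

end ExpMulRpow

lemma strictConcaveOn_log_one_add {E : Type*} [AddCommMonoid E] [Module ℝ E] {s : Set E}
    {f : E → ℝ} (hf : StrictConcaveOn ℝ s f) (hf_gt : ∀ x ∈ s, -1 < f x) :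
    StrictConcaveOn ℝ s (fun x => log (1 + f x)) :=
  strictConcaveOn_comp_of_mapsTo strictConcaveOn_log_Ioi.concaveOn strictMonoOn_log
    ((concaveOn_const 1 hf.1).add_strictConcaveOn hf)
    fun x hx => neg_lt_iff_pos_add'.1 (hf_gt x hx)

lemma concaveOn_neg_mul_rpow {c g : ℝ} (hc : 0 ≤ c) (hg : 1 ≤ g) :
    ConcaveOn ℝ (Set.Ici 0) (fun x : ℝ => -c * x ^ g) := by
  simpa only [neg_mul, smul_eq_mul, Pi.neg_def] using ((convexOn_rpow hg).smul hc).neg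

theorem stmt3_general (c g α β h I Pmin : ℝ) (hc : 0 ≤ c) (hg : 1 ≤ g)
    (hα : α < 0) (hβ : β < 0) (hh : 0 < h) (hI : 0 < I) (hPmin : 0 < Pmin)
    (hhigh : (1 - β) / β ≤ α * (h * Pmin / I) ^ β) :
    StrictConcaveOn ℝ (Set.Ici Pmin)
      (fun P : ℝ => -c * P ^ g + Real.log (1 + Real.exp (α * (h * P / I) ^ β))) := by
  have hscale : ∀ P : ℝ, 0 < P → α * (h * P / I) ^ β = α * (h / I) ^ β * P ^ β := fun P hP => by
    rw [mul_div_right_comm, mul_rpow (div_pos hh hI).le hP.le, mul_assoc]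
  have hA : α * (h / I) ^ β < 0 := mul_neg_of_neg_of_pos hα (by positivity)
  have hpdr : StrictConcaveOn ℝ (Set.Ici Pmin) (fun P : ℝ => exp (α * (h * P / I) ^ β)) :=
    (strictConcaveOn_Ici_exp_mul_rpow_of_neg hPmin hA hβ (hscale Pmin hPmin ▸ hhigh)).congr
      fun P hP => congrArg exp (hscale P (hPmin.trans_le hP)).symm
  have hprice : ConcaveOn ℝ (Set.Ici Pmin) (fun P : ℝ => -c * P ^ g) :=
    (concaveOn_neg_mul_rpow hc hg).subset (Set.Ici_subset_Ici.2 hPmin.le) (convex_Ici Pmin)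
  exact hprice.add_strictConcaveOn
    (strictConcaveOn_log_one_add hpdr fun P _ => neg_one_lt_zero.trans (exp_pos _))

/-- In the high-PDR regime, the utility
`U(P) = -c·P^g + ln(1 + exp(α·(h·P/I)^β))` is strictly concave on `[P_min, P_max]`. -/
theorem stmt3 (c g α β h I Pmin Pmax : ℝ) (hc : 0 < c) (hg : 1 < g)
    (hα : α < 0) (hβ : β < 0) (hh : 0 < h) (hI : 0 < I)
    (hPmin : 0 < Pmin) (hle : Pmin ≤ Pmax)
    (hhigh : (1 - β) / β ≤ α * (h * Pmin / I) ^ β) :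
    StrictConcaveOn ℝ (Set.Icc Pmin Pmax)
      (fun P : ℝ => -c * P ^ g + Real.log (1 + Real.exp (α * (h * P / I) ^ β))) :=
  (stmt3_general c g α β h I Pmin hc.le hg.le hα hβ hh hI hPmin hhigh).subset
    Set.Icc_subset_Ici_self (convex_Icc Pmin Pmax)
end

section
/- Let c > 0, g > 1, α < 0, β < 0, h > 0, I > 0, and let 0 < P_min ≤ P_max satisfy α·(h·P_min/I)^β ≥ (1−β)/β. Then the utility U(P) = −c·P^g + ln(1 + exp(α·(h·P/I)^β)) has a unique maximizer on [P_min, P_max]: there exists exactly one P* ∈ [P_min, P_max] such that U(P) ≤ U(P*) for all P ∈ [P_min, P_max]. (Uniqueness of each player's best response at fixed data rate.) -/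
open Real

/-!
The utility is strictly concave, so compactness gives a maximizer and strict concavity its
uniqueness. The price `-c·P^g` is strictly concave because `g > 1`. For the reward, the second
derivative of `PDR(γ) = exp(α·γ^β)` has the sign of `α·β·γ^β - (1 - β)`, so the high-PDR regime is
exactly where `PDR` is concave; since `γ^β` decreases, the regime persists above `P_min`. The
increasing concave function `ln` then preserves concavity.
-/

section Convexity

lemma strictConvexOn_const_smul {𝕜 E F : Type*} [CommSemiring 𝕜] [PartialOrder 𝕜]
    [AddCommMonoid E] [SMul 𝕜 E] [AddCommMonoid F] [PartialOrder F] [Module 𝕜 F]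
    [PosSMulStrictMono 𝕜 F] {s : Set E} {f : E → F} {c : 𝕜} (hc : 0 < c)
    (hf : StrictConvexOn 𝕜 s f) : StrictConvexOn 𝕜 s fun x ↦ c • f x := by
  refine ⟨hf.1, fun x hx y hy hxy a b ha hb hab ↦ ?_⟩
  calc c • f (a • x + b • y)
      < c • (a • f x + b • f y) := smul_lt_smul_of_pos_left (hf.2 hx hy hxy ha hb hab) hc
    _ = a • c • f x + b • c • f y := by rw [smul_add, smul_comm c, smul_comm c]

lemma concaveOn_log_comp {E : Type*} [AddCommMonoid E] [SMul ℝ E] {s : Set E} {f : E → ℝ}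
    (hf : ConcaveOn ℝ s f) (hpos : ∀ x ∈ s, 0 < f x) : ConcaveOn ℝ s fun x ↦ log (f x) := by
  refine ⟨hf.1, fun x hx y hy a b ha hb hab ↦ ?_⟩
  have hmix : 0 < a • f x + b • f y := convex_Ioi (0 : ℝ) (hpos x hx) (hpos y hy) ha hb hab
  calc a • log (f x) + b • log (f y)
      ≤ log (a • f x + b • f y) :=
        strictConcaveOn_log_Ioi.concaveOn.2 (hpos x hx) (hpos y hy) ha hb hab
    _ ≤ log (f (a • x + b • y)) := log_le_log hmix (hf.2 hx hy ha hb hab)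

lemma existsUnique_isMaxOn_of_strictConcaveOn {E : Type*} [AddCommMonoid E] [Module ℝ E]
    [TopologicalSpace E] {s : Set E} {f : E → ℝ} (hf : StrictConcaveOn ℝ s f)
    (hs : IsCompact s) (hne : s.Nonempty) (hcont : ContinuousOn f s) :
    ∃! x, x ∈ s ∧ IsMaxOn f s x := by
  obtain ⟨x, hx, hmax⟩ := hs.exists_isMaxOn hne hcont
  exact ⟨x, ⟨hx, hmax⟩, fun y ⟨hy, hymax⟩ ↦ hf.eq_of_isMaxOn hymax hmax hy hx⟩

end Convexity

/-- The sigmoid packet-delivery-ratio model `PDR(γ) = exp(α·γ^β)`, as a function of the SINR `γ`. -/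
noncomputable def pdr (α β γ : ℝ) : ℝ := exp (α * γ ^ β)

section PDR

variable {α β γ γmin : ℝ}

lemma pdr_pos : 0 < pdr α β γ := exp_pos _

lemma hasDerivAt_pdr (hγ : γ ≠ 0) :
    HasDerivAt (pdr α β) (pdr α β γ * (α * (β * γ ^ (β - 1)))) γ :=
  ((hasDerivAt_rpow_const (Or.inl hγ)).const_mul α).exp

lemma hasDerivAt_deriv_pdr (hγ : γ ≠ 0) :
    HasDerivAt (fun x ↦ pdr α β x * (α * (β * x ^ (β - 1))))
      (pdr α β γ * (α * β * γ ^ β / γ ^ 2) * (α * β * γ ^ β - (1 - β))) γ := by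
  refine ((hasDerivAt_pdr hγ).mul
    (((hasDerivAt_rpow_const (Or.inl hγ)).const_mul β).const_mul α)).congr_deriv ?_
  simp only [rpow_sub_one hγ]
  field_simp
  ring

lemma continuousOn_pdr : ContinuousOn (pdr α β) (Set.Ioi 0) :=
  fun _ hγ ↦ (hasDerivAt_pdr (ne_of_gt hγ)).continuousAt.continuousWithinAt

lemma concaveOn_pdr {s : Set ℝ} (hs : Convex ℝ s) (hpos : s ⊆ Set.Ioi 0) (hαβ : 0 ≤ α * β)
    (hhigh : ∀ γ ∈ s, α * β * γ ^ β ≤ 1 - β) : ConcaveOn ℝ s (pdr α β) := by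
  have hne : ∀ γ ∈ interior s, γ ≠ 0 := fun γ hγ ↦ ne_of_gt (hpos (interior_subset hγ))
  refine concaveOn_of_hasDerivWithinAt2_nonpos hs (continuousOn_pdr.mono hpos)
    (fun γ hγ ↦ (hasDerivAt_pdr (hne γ hγ)).hasDerivWithinAt)
    (fun γ hγ ↦ (hasDerivAt_deriv_pdr (hne γ hγ)).hasDerivWithinAt) fun γ hγ ↦ ?_
  have hγs : γ ∈ s := interior_subset hγ
  have hγpow : 0 < γ ^ β := rpow_pos_of_pos (hpos hγs) β
  have hpdr : 0 < pdr α β γ := pdr_pos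
  exact mul_nonpos_of_nonneg_of_nonpos (by positivity) (sub_nonpos.2 (hhigh γ hγs))

lemma concaveOn_pdr_Ici (hα : α ≤ 0) (hβ : β < 0) (hγmin : 0 < γmin)
    (hhigh : (1 - β) / β ≤ α * γmin ^ β) : ConcaveOn ℝ (Set.Ici γmin) (pdr α β) := by
  have hαβ : 0 ≤ α * β := mul_nonneg_of_nonpos_of_nonpos hα hβ.le
  refine concaveOn_pdr (convex_Ici γmin) (Set.Ici_subset_Ioi.2 hγmin) hαβ fun γ hγ ↦ ?_
  calc α * β * γ ^ β
      ≤ α * β * γmin ^ β :=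
        mul_le_mul_of_nonneg_left (rpow_le_rpow_of_nonpos hγmin hγ hβ.le) hαβ
    _ = α * γmin ^ β * β := by ring
    _ ≤ 1 - β := (div_le_iff_of_neg hβ).1 hhigh

end PDR

/-- The Link Adaptation utility `U(P) = -c·P^g + ln(1 + PDR(h·P/I))` of a player transmitting at
power `P`, with pricing coefficients `c`, `g`, channel gain `h` and interference-plus-noise
power `I`. -/
noncomputable def linkUtility (c g α β h I P : ℝ) : ℝ :=
  -c * P ^ g + log (1 + pdr α β (h * P / I))

section LinkUtility

variable {c g α β h I Pmin : ℝ}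

lemma concaveOn_pdr_sinr (hα : α ≤ 0) (hβ : β < 0) (hh : 0 < h) (hI : 0 < I) (hPmin : 0 < Pmin)
    (hhigh : (1 - β) / β ≤ α * (h * Pmin / I) ^ β) :
    ConcaveOn ℝ (Set.Ici Pmin) fun P ↦ pdr α β (h * P / I) := by
  have hsinr : ∀ P, LinearMap.mulLeft ℝ (h / I) P = h * P / I := fun P ↦ div_mul_eq_mul_div h I P
  have hconc := (concaveOn_pdr_Ici hα hβ (by positivity) hhigh).comp_linearMap
    (LinearMap.mulLeft ℝ (h / I))
  simp only [Function.comp_def, hsinr] at hconc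
  refine hconc.subset (fun P (hP : Pmin ≤ P) ↦ ?_) (convex_Ici Pmin)
  rw [Set.mem_preimage, hsinr, Set.mem_Ici]
  gcongr

lemma strictConcaveOn_linkUtility (hc : 0 < c) (hg : 1 < g) (hα : α ≤ 0) (hβ : β < 0)
    (hh : 0 < h) (hI : 0 < I) (hPmin : 0 < Pmin)
    (hhigh : (1 - β) / β ≤ α * (h * Pmin / I) ^ β) :
    StrictConcaveOn ℝ (Set.Ici Pmin) (linkUtility c g α β h I) := by
  have hprice : StrictConcaveOn ℝ (Set.Ici Pmin) fun P ↦ -c * P ^ g := by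
    simpa only [Pi.neg_def, smul_eq_mul, neg_mul] using
      (strictConvexOn_const_smul hc ((strictConvexOn_rpow hg).subset
        (Set.Ici_subset_Ici.2 hPmin.le) (convex_Ici Pmin))).neg
  have hreward : ConcaveOn ℝ (Set.Ici Pmin) fun P ↦ log (1 + pdr α β (h * P / I)) :=
    concaveOn_log_comp
      ((concaveOn_const 1 (convex_Ici Pmin)).add (concaveOn_pdr_sinr hα hβ hh hI hPmin hhigh))
      fun _ _ ↦ add_pos one_pos pdr_pos
  exact hprice.add_concaveOn hreward

lemma continuousOn_linkUtility (hh : 0 < h) (hI : 0 < I) :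
    ContinuousOn (linkUtility c g α β h I) (Set.Ioi 0) := by
  have hprice : ContinuousOn (fun P : ℝ ↦ -c * P ^ g) (Set.Ioi 0) :=
    (continuousOn_id.rpow_const fun P hP ↦ Or.inl (ne_of_gt hP)).const_mul (-c)
  have hpdr : ContinuousOn (fun P ↦ pdr α β (h * P / I)) (Set.Ioi 0) :=
    continuousOn_pdr.comp (by fun_prop) fun P (hP : 0 < P) ↦ div_pos (mul_pos hh hP) hI
  exact hprice.add ((hpdr.const_add 1).log fun _ _ ↦ (add_pos one_pos pdr_pos).ne')

end LinkUtility

/-- Uniqueness of each player's best response at fixed data rate: in the high-PDR regime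
the utility `U(P) = -c·P^g + ln(1 + exp(α·(h·P/I)^β))` has exactly one maximizer on
`[P_min, P_max]`. -/
theorem stmt4 (c g α β h I Pmin Pmax : ℝ) (hc : 0 < c) (hg : 1 < g)
    (hα : α < 0) (hβ : β < 0) (hh : 0 < h) (hI : 0 < I)
    (hPmin : 0 < Pmin) (hle : Pmin ≤ Pmax)
    (hhigh : (1 - β) / β ≤ α * (h * Pmin / I) ^ β) :
    ∃! Pstar : ℝ, Pstar ∈ Set.Icc Pmin Pmax ∧
      ∀ P ∈ Set.Icc Pmin Pmax,
        -c * P ^ g + Real.log (1 + Real.exp (α * (h * P / I) ^ β)) ≤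
          -c * Pstar ^ g + Real.log (1 + Real.exp (α * (h * Pstar / I) ^ β)) := by
  have hconc : StrictConcaveOn ℝ (Set.Icc Pmin Pmax) (linkUtility c g α β h I) :=
    (strictConcaveOn_linkUtility hc hg hα.le hβ hh hI hPmin hhigh).subset
      Set.Icc_subset_Ici_self (convex_Icc Pmin Pmax)
  have hcont : ContinuousOn (linkUtility c g α β h I) (Set.Icc Pmin Pmax) :=
    (continuousOn_linkUtility hh hI).mono fun P hP ↦ hPmin.trans_le hP.1
  exact existsUnique_isMaxOn_of_strictConcaveOn hconc isCompact_Icc (Set.nonempty_Icc.2 hle) hcont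
end

section
/- Let γ > 1 be real and let α_x, α_z, α_y, β_x, β_z, β_y be real numbers with α_x < 0, α_y ≤ α_z ≤ α_x, α_x + α_y < 2·α_z, and β_x ≤ β_z ≤ β_y with β_x + β_y ≥ 2·β_z. Then α_x·γ^{β_x} + α_y·γ^{β_y} < 2·α_z·γ^{β_z}. -/
open Real

theorem two_mul_mul_add_mul_le_add_mul_add {R : Type*} [CommSemiring R] [PartialOrder R]
    [IsStrictOrderedRing R] [ExistsAddOfLE R] {a b p r : R} (hba : b ≤ a) (hpr : p ≤ r) :
    2 * (a * p + b * r) ≤ (a + b) * (p + r) :=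
  calc 2 * (a * p + b * r) = (b * r + a * p) + (b * r + a * p) := by ring
    _ ≤ (b * r + a * p) + (b * p + a * r) := by
      gcongr _ + ?_
      exact mul_add_mul_le_mul_add_mul hba hpr
    _ = (a + b) * (p + r) := by ring

section Convex

variable {𝕜 : Type*} [Field 𝕜] [LinearOrder 𝕜] [IsStrictOrderedRing 𝕜]
  {s : Set 𝕜} {f : 𝕜 → 𝕜} {x y z : 𝕜}

theorem two_mul_le_add_of_convexOn_of_monotoneOn (hf : ConvexOn 𝕜 s f) (hmono : MonotoneOn f s)
    (hx : x ∈ s) (hy : y ∈ s) (hz : z ∈ s) (hmid : 2 * z ≤ x + y) :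
    2 * f z ≤ f x + f y := by
  have half_nonneg : (0 : 𝕜) ≤ 1 / 2 := by norm_num
  have half_add_half : (1 / 2 : 𝕜) + 1 / 2 = 1 := by norm_num
  have midpoint_mem := hf.1 hx hy half_nonneg half_nonneg half_add_half
  have le_midpoint : z ≤ (1 / 2 : 𝕜) • x + (1 / 2 : 𝕜) • y := by
    simp only [smul_eq_mul]
    linarith
  have f_le := (hmono hz midpoint_mem le_midpoint).trans
    (hf.2 hx hy half_nonneg half_nonneg half_add_half)
  simp only [smul_eq_mul] at f_le
  linarith

theorem stmt9_general (hf : ConvexOn 𝕜 s f) (hmono : MonotoneOn f s)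
    (hx : x ∈ s) (hy : y ∈ s) (hz : z ∈ s) (hxy : x ≤ y) (hmid : 2 * z ≤ x + y) (hfz : 0 < f z)
    {a b c : 𝕜} (hba : b ≤ a) (hab : a + b ≤ 0) (hc : a + b < 2 * c) :
    a * f x + b * f y < 2 * (c * f z) := by
  have chebyshev : 2 * (a * f x + b * f y) ≤ (a + b) * (f x + f y) :=
    two_mul_mul_add_mul_le_add_mul_add hba (hmono hx hy hxy)
  have convexity : (a + b) * (f x + f y) ≤ (a + b) * (2 * f z) :=
    mul_le_mul_of_nonpos_left (two_mul_le_add_of_convexOn_of_monotoneOn hf hmono hx hy hz hmid) hab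
  have weights : (a + b) * f z < 2 * c * f z := mul_lt_mul_of_pos_right hc hfz
  linarith

end Convex

/-- Core midpoint inequality behind the Large Midpoint Property: for SINR `γ > 1` and
sigmoid parameters with `α_x < 0`, `α_y ≤ α_z ≤ α_x`, `α_x + α_y < 2α_z`,
`β_x ≤ β_z ≤ β_y` and `β_x + β_y ≥ 2β_z`, one has
`α_x·γ^β_x + α_y·γ^β_y < 2·α_z·γ^β_z`. -/
theorem stmt9 (γ αx αz αy βx βz βy : ℝ) (hγ : 1 < γ)
    (hαx : αx < 0) (hα₁ : αy ≤ αz) (hα₂ : αz ≤ αx) (hαmid : αx + αy < 2 * αz)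
    (hβ₁ : βx ≤ βz) (hβ₂ : βz ≤ βy) (hβmid : 2 * βz ≤ βx + βy) :
    αx * γ ^ βx + αy * γ ^ βy < 2 * (αz * γ ^ βz) :=
  have hγ₀ : 0 < γ := one_pos.trans hγ
  stmt9_general (convexOn_rpow_left hγ₀) ((monotone_rpow_of_base_ge_one hγ.le).monotoneOn _)
    (Set.mem_univ _) (Set.mem_univ _) (Set.mem_univ _) (hβ₁.trans hβ₂) hβmid
    (rpow_pos_of_pos hγ₀ _) (hα₁.trans hα₂) (by linarith) hαmid
end

section
/- Let γ > 1 and let α_x, α_z, α_y, β_x, β_z, β_y be reals with α_x < 0, α_y ≤ α_z ≤ α_x, α_x + α_y < 2·α_z, β_x ≤ β_z ≤ β_y and β_x + β_y ≥ 2·β_z. Let q ≥ 0, let 0 < R_x < R_y with R_z = (R_x + R_y)/2, and let C ∈ ℝ. Then 2·(C − q/R_z + α_z·γ^{β_z}/2) > (C − q/R_x + α_x·γ^{β_x}/2) + (C − q/R_y + α_y·γ^{β_y}/2). That is, the per-player term of the potential function F(P, R) = −c·P^g − q/R + α(R)·γ^{β(R)}/2 satisfies the strict large-midpoint inequality in the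 rate variable at fixed power (C = −c·P^g). -/
open Real

/-!
Since `-q / R` is concave in `R > 0`, only the strict inequality for `α * γ ^ β` is at stake.
Convexity of `t ↦ γ ^ t` turns the condition on `β` into the same condition on `γ ^ β`.
With `u = γ ^ β`, split `α * u = αx * u - (αx - α) * u`: the factor `αx ≤ 0` reverses the convexity
of `u`, while `αx - α` is nonnegative and strictly convex along the three points, which suffices
because `uz ≤ uy`.
-/

lemma convexComb_mul_lt_mul {K : Type*} [CommRing K] [PartialOrder K] [IsStrictOrderedRing K]
    {a b αx αy αz ux uy uz : K} (hab : a + b = 1) (hαx : αx ≤ 0) (hαzx : αz ≤ αx)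
    (hα : a * αx + b * αy < αz) (huy : 0 < uy) (huzy : uz ≤ uy) (hu : uz ≤ a * ux + b * uy) :
    a * (αx * ux) + b * (αy * uy) < αz * uz :=
  calc a * (αx * ux) + b * (αy * uy)
      = (a * αx + b * αy - αx) * uy + αx * (a * ux + b * uy) := by
        linear_combination (-αx * uy) * hab
    _ < (αz - αx) * uy + αx * (a * ux + b * uy) := by gcongr
    _ ≤ (αz - αx) * uz + αx * uz :=
        add_le_add (mul_le_mul_of_nonpos_left huzy (sub_nonpos.2 hαzx))
          (mul_le_mul_of_nonpos_left hu hαx)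
    _ = αz * uz := by ring

lemma rpow_le_convexComb_rpow {γ a b x y z : ℝ} (hγ : 1 ≤ γ) (ha : 0 ≤ a) (hb : 0 ≤ b)
    (hab : a + b = 1) (hz : z ≤ a * x + b * y) : γ ^ z ≤ a * γ ^ x + b * γ ^ y :=
  calc γ ^ z ≤ γ ^ (a * x + b * y) := rpow_le_rpow_of_exponent_le hγ hz
    _ ≤ a * γ ^ x + b * γ ^ y :=
        (convexOn_rpow_left (zero_lt_one.trans_le hγ)).2 trivial trivial ha hb hab

lemma div_convexComb_le_convexComb_div {K : Type*} [Field K] [LinearOrder K] [IsStrictOrderedRing K]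
    {q a b x y : K} (hq : 0 ≤ q) (ha : 0 ≤ a) (hb : 0 ≤ b) (hab : a + b = 1)
    (hx : 0 < x) (hy : 0 < y) : q / (a * x + b * y) ≤ a * (q / x) + b * (q / y) := by
  have inv_le : (a * x + b * y)⁻¹ ≤ a * x⁻¹ + b * y⁻¹ := by
    simpa using (convexOn_zpow (𝕜 := K) (-1)).2 hx hy ha hb hab
  calc q / (a * x + b * y) = q * (a * x + b * y)⁻¹ := div_eq_mul_inv ..
    _ ≤ q * (a * x⁻¹ + b * y⁻¹) := mul_le_mul_of_nonneg_left inv_le hq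
    _ = a * (q / x) + b * (q / y) := by ring

theorem stmt10_general {γ αx αz αy βx βz βy q Rx Ry Rz a b : ℝ} (hγ : 1 ≤ γ)
    (ha : 0 ≤ a) (hb : 0 ≤ b) (hab : a + b = 1)
    (hαx : αx ≤ 0) (hαzx : αz ≤ αx) (hα : a * αx + b * αy < αz)
    (hβzy : βz ≤ βy) (hβ : βz ≤ a * βx + b * βy)
    (hq : 0 ≤ q) (hRx : 0 < Rx) (hRy : 0 < Ry) (hRz : Rz = a * Rx + b * Ry) (C : ℝ) :
    a * (C - q / Rx + αx * γ ^ βx / 2) + b * (C - q / Ry + αy * γ ^ βy / 2) <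
      C - q / Rz + αz * γ ^ βz / 2 := by
  have sigmoid_lt : a * (αx * γ ^ βx) + b * (αy * γ ^ βy) < αz * γ ^ βz :=
    convexComb_mul_lt_mul hab hαx hαzx hα (rpow_pos_of_pos (zero_lt_one.trans_le hγ) βy)
      (rpow_le_rpow_of_exponent_le hγ hβzy) (rpow_le_convexComb_rpow hγ ha hb hab hβ)
  have price_le : q / Rz ≤ a * (q / Rx) + b * (q / Ry) :=
    hRz ▸ div_convexComb_le_convexComb_div hq ha hb hab hRx hRy
  calc a * (C - q / Rx + αx * γ ^ βx / 2) + b * (C - q / Ry + αy * γ ^ βy / 2)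
      = C - (a * (q / Rx) + b * (q / Ry))
          + (a * (αx * γ ^ βx) + b * (αy * γ ^ βy)) / 2 := by linear_combination C * hab
    _ < C - q / Rz + αz * γ ^ βz / 2 := by linarith

/-- The per-player term of the Link Adaptation potential function,
`F(P, R) = -c·P^g - q/R + α(R)·γ^{β(R)}/2`, satisfies the strict large-midpoint
inequality in the rate variable at fixed power (here `C = -c·P^g`). -/
theorem stmt10 (γ αx αz αy βx βz βy : ℝ) (hγ : 1 < γ)
    (hαx : αx < 0) (hα₁ : αy ≤ αz) (hα₂ : αz ≤ αx) (hαmid : αx + αy < 2 * αz)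
    (hβ₁ : βx ≤ βz) (hβ₂ : βz ≤ βy) (hβmid : 2 * βz ≤ βx + βy)
    (q : ℝ) (hq : 0 ≤ q) (Rx Ry Rz : ℝ) (hRx : 0 < Rx) (hRxy : Rx < Ry)
    (hRz : Rz = (Rx + Ry) / 2) (C : ℝ) :
    (C - q / Rx + αx * γ ^ βx / 2) + (C - q / Ry + αy * γ ^ βy / 2) <
      2 * (C - q / Rz + αz * γ ^ βz / 2) := by
  linarith [stmt10_general (a := 1 / 2) (b := 1 / 2) (βx := βx) (αy := αy) hγ.le (by norm_num)
    (by norm_num) (by norm_num) hαx.le hα₂ (by linarith) hβ₂ (by linarith) hq hRx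
    (hRx.trans hRxy) (hRz.trans (by ring)) C]
end

section
/- Let a ≤ b be integers and let f : ℤ → ℝ satisfy the Large Midpoint Property on [a, b]: for every integer z with a ≤ z and z + 2 ≤ b, if f(z) ≠ f(z+2) then f(z+1) > min(f(z), f(z+2)), and if f(z) = f(z+2) then f(z+1) ≥ f(z). Suppose x ∈ [a, b] is a local maximizer: f(x−1) ≤ f(x) whenever a ≤ x−1, and f(x+1) ≤ f(x) whenever x+1 ≤ b. Then x is a global maximizer: f(y) ≤ f(x) for every integer y ∈ [a, b]. -/
/-!
The Large Midpoint Property at `z, z + 1, z + 2` forbids a descent, even a weak one, from being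
followed by a strict ascent. Hence once `f` fails to increase to the right of `x`, it never
increases again, and by reflection the same holds to the left of `x`.
-/

open Set
open scoped Pointwise

section LargeMidpoint

variable {α : Type*} [LinearOrder α] {f : ℤ → α} {s : Set ℤ} {x z : ℤ}

/-- The Large Midpoint Property on a set `s` of integers, meant for an order-connected `s`:
the function is total on `ℤ`, but only pairs of endpoints `z`, `z + 2` in `s` are constrained. -/
def LargeMidpointOn (f : ℤ → α) (s : Set ℤ) : Prop :=
  ∀ z : ℤ, z ∈ s → z + 2 ∈ s →
    (f z ≠ f (z + 2) → min (f z) (f (z + 2)) < f (z + 1)) ∧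
    (f z = f (z + 2) → f z ≤ f (z + 1))

namespace LargeMidpointOn

theorem comp_neg (hf : LargeMidpointOn f s) : LargeMidpointOn (fun z ↦ f (-z)) (-s) := by
  intro z hz hz₂
  have hright : -(z + 2) + 2 = -z := by ring
  have hmid : -(z + 2) + 1 = -(z + 1) := by ring
  obtain ⟨hne, heq⟩ := hf (-(z + 2)) hz₂ (by rwa [hright])
  rw [hright, hmid] at hne heq
  exact ⟨fun h ↦ min_comm (f (-z)) _ ▸ hne h.symm, fun h ↦ h.trans_le (heq h.symm)⟩

theorem apply_add_two_le (hf : LargeMidpointOn f s) (hz : z ∈ s) (hz₂ : z + 2 ∈ s)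
    (hle : f (z + 1) ≤ f z) : f (z + 2) ≤ f (z + 1) := by
  obtain ⟨hne, heq⟩ := hf z hz hz₂
  by_cases h : f z = f (z + 2)
  · exact h.symm.trans_le (heq h)
  · exact ((min_lt_iff.mp (hne h)).resolve_left hle.not_gt).le

theorem apply_add_one_le (hf : LargeMidpointOn f s) (hs : s.OrdConnected) (hx : x ∈ s)
    (hright : x + 1 ∈ s → f (x + 1) ≤ f x) (hxz : x ≤ z) :
    z + 1 ∈ s → f (z + 1) ≤ f z := by
  induction z, hxz using Int.leInduction with
  | base => exact hright
  | succ z hxz ih =>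
    rw [add_assoc, one_add_one_eq_two]
    intro hz₂
    have hz : z ∈ s := hs.out hx hz₂ ⟨hxz, by lia⟩
    have hz₁ : z + 1 ∈ s := hs.out hx hz₂ ⟨by lia, by lia⟩
    exact hf.apply_add_two_le hz hz₂ (ih hz₁)

theorem antitoneOn_inter_Ici (hf : LargeMidpointOn f s) (hs : s.OrdConnected) (hx : x ∈ s)
    (hright : x + 1 ∈ s → f (x + 1) ≤ f x) : AntitoneOn f (s ∩ Ici x) :=
  antitoneOn_of_succ_le (hs.inter ordConnected_Ici) fun _ _ hz hz₁ ↦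
    hf.apply_add_one_le hs hx hright hz.2 hz₁.1

theorem monotoneOn_inter_Iic (hf : LargeMidpointOn f s) (hs : s.OrdConnected) (hx : x ∈ s)
    (hleft : x - 1 ∈ s → f (x - 1) ≤ f x) : MonotoneOn f (s ∩ Iic x) := by
  have hs_neg : (-s).OrdConnected :=
    ⟨fun _ hy _ hz _ hw ↦ hs.out hz hy ⟨neg_le_neg hw.2, neg_le_neg hw.1⟩⟩
  have hanti : AntitoneOn (fun z ↦ f (-z)) (-s ∩ Ici (-x)) := by
    refine hf.comp_neg.antitoneOn_inter_Ici hs_neg (neg_mem_neg.mpr hx) fun h ↦ ?_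
    have hreflect : -(-x + 1) = x - 1 := by ring
    rw [mem_neg, hreflect] at h
    simpa only [hreflect, neg_neg] using hleft h
  have neg_mem {w : ℤ} (hw : w ∈ s ∩ Iic x) : -w ∈ -s ∩ Ici (-x) :=
    ⟨neg_mem_neg.mpr hw.1, neg_le_neg (mem_Iic.mp hw.2)⟩
  intro y hy z hz hyz
  simpa only [neg_neg] using hanti (neg_mem hz) (neg_mem hy) (neg_le_neg hyz)

end LargeMidpointOn

theorem stmt11_general (hf : LargeMidpointOn f s) (hs : s.OrdConnected) (hx : x ∈ s)
    (hleft : x - 1 ∈ s → f (x - 1) ≤ f x) (hright : x + 1 ∈ s → f (x + 1) ≤ f x) :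
    IsMaxOn f s x := by
  intro y hy
  rcases le_total y x with hyx | hxy
  · exact hf.monotoneOn_inter_Iic hs hx hleft ⟨hy, hyx⟩ ⟨hx, self_mem_Iic⟩ hyx
  · exact hf.antitoneOn_inter_Ici hs hx hright ⟨hx, self_mem_Ici⟩ ⟨hy, hxy⟩ hxy

end LargeMidpoint

/-- For a function on an integer interval satisfying the Large Midpoint Property,
a local maximizer is a global maximizer. -/
theorem stmt11 (a b : ℤ) (hab : a ≤ b) (f : ℤ → ℝ)
    (hLMP : ∀ z : ℤ, a ≤ z → z + 2 ≤ b →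
      (f z ≠ f (z + 2) → min (f z) (f (z + 2)) < f (z + 1)) ∧
      (f z = f (z + 2) → f z ≤ f (z + 1)))
    (x : ℤ) (hxa : a ≤ x) (hxb : x ≤ b)
    (hloc₁ : a ≤ x - 1 → f (x - 1) ≤ f x)
    (hloc₂ : x + 1 ≤ b → f (x + 1) ≤ f x) :
    ∀ y : ℤ, a ≤ y → y ≤ b → f y ≤ f x := by
  have hf : LargeMidpointOn f (Icc a b) := fun z hz hz₂ ↦ hLMP z hz.1 hz₂.2
  exact fun y hya hyb ↦ stmt11_general hf ordConnected_Icc ⟨hxa, hxb⟩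
    (fun h ↦ hloc₁ h.1) (fun h ↦ hloc₂ h.2) ⟨hya, hyb⟩
end

section
/- Let p ∈ (0, 1), 0 < T_slot ≤ T_s, T_payload > 0, m ∈ ℕ, and let d ≥ 0 satisfy d·(1−p)·T_payload < p^{m+1}·T_slot; let l, e₀, f₀ be arbitrary reals. Then the Adaptive Backoff utility V(w) = d·(1−p)·T_payload/(T_slot·(p·w + 1) + T_s − T_slot) − l·(e₀·w + f₀) − p^{m+1}/(p·w + 1) is strictly concave on [0, ∞). -/
/-!
Up to an affine term, and in the variable `x = p * w + 1`, the utility is `a / (x + c) - b / x` with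
`c ≥ 0`, `b > 0` and `a < b`. Minus this function is
`(b - a⁺) * x⁻¹ + a⁺ * (x⁻¹ - (x + c)⁻¹) + a⁻ * (x + c)⁻¹`.
The first summand is strictly convex. The second is convex because `x⁻¹ - (x + c)⁻¹` equals
`c * (x⁻¹ * (x + c)⁻¹)`, a multiple of a product of two nonnegative decreasing convex functions.
-/

open Set

theorem strictConvexOn_const_mul {𝕜 E : Type*} [CommSemiring 𝕜] [PartialOrder 𝕜]
    [IsStrictOrderedRing 𝕜] [AddCommMonoid E] [SMul 𝕜 E] {s : Set E} {f : E → 𝕜} {c : 𝕜}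
    (hc : 0 < c) (hf : StrictConvexOn 𝕜 s f) :
    StrictConvexOn 𝕜 s (fun x ↦ c * f x) := by
  refine ⟨hf.1, fun x hx y hy hxy a b ha hb hab ↦ ?_⟩
  calc c * f (a • x + b • y)
      < c * (a • f x + b • f y) := mul_lt_mul_of_pos_left (hf.2 hx hy hxy ha hb hab) hc
    _ = a • (c * f x) + b • (c * f y) := by simp only [smul_eq_mul]; ring

theorem strictConcaveOn_comp_affineMap {𝕜 E F β : Type*} [Ring 𝕜] [PartialOrder 𝕜]
    [AddCommGroup E] [Module 𝕜 E] [AddCommGroup F] [Module 𝕜 F] [AddCommMonoid β]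
    [PartialOrder β] [SMul 𝕜 β]
    {s : Set F} {f : F → β} (hf : StrictConcaveOn 𝕜 s f) {g : E →ᵃ[𝕜] F}
    (hg : Function.Injective g) : StrictConcaveOn 𝕜 (g ⁻¹' s) (f ∘ g) := by
  refine ⟨hf.1.affine_preimage g, fun x hx y hy hxy a b ha hb hab ↦ ?_⟩
  simpa only [Function.comp_apply, Convex.combo_affine_apply hab] using
    hf.2 hx hy (hg.ne hxy) ha hb hab

theorem convexOn_mul_add_const {𝕜 : Type*} [CommSemiring 𝕜] [PartialOrder 𝕜] [IsOrderedRing 𝕜]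
    {s : Set 𝕜} (hs : Convex 𝕜 s) (a b : 𝕜) :
    ConvexOn 𝕜 s (fun x ↦ a * x + b) :=
  ((LinearMap.mulLeft 𝕜 a).convexOn hs).add_const b

section OrderedField

variable {𝕜 : Type*} [Field 𝕜] [LinearOrder 𝕜] [IsStrictOrderedRing 𝕜]

theorem convexOn_inv_Ioi : ConvexOn 𝕜 (Ioi 0) (fun x : 𝕜 ↦ x⁻¹) := by
  simpa only [zpow_neg_one] using convexOn_zpow (𝕜 := 𝕜) (-1)

theorem convexOn_inv_add {c : 𝕜} (hc : 0 ≤ c) : ConvexOn 𝕜 (Ioi 0) (fun x : 𝕜 ↦ (x + c)⁻¹) :=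
  (convexOn_inv_Ioi.translate_left c).subset (fun _ hx ↦ add_pos_of_nonneg_of_pos hc hx)
    (convex_Ioi 0)

theorem convexOn_inv_sub_inv_add {c : 𝕜} (hc : 0 ≤ c) :
    ConvexOn 𝕜 (Ioi 0) (fun x : 𝕜 ↦ x⁻¹ - (x + c)⁻¹) := by
  have antitoneOn_inv : AntitoneOn (fun x : 𝕜 ↦ x⁻¹) (Ioi 0) := inv_strictAntiOn.antitoneOn
  have antitoneOn_inv_add : AntitoneOn (fun x : 𝕜 ↦ (x + c)⁻¹) (Ioi 0) := fun x hx y _ hxy ↦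
    inv_anti₀ (add_pos_of_pos_of_nonneg hx hc) (add_le_add_left hxy c)
  have convexOn_product : ConvexOn 𝕜 (Ioi 0) ((fun x : 𝕜 ↦ x⁻¹) * fun x ↦ (x + c)⁻¹) :=
    convexOn_inv_Ioi.mul (convexOn_inv_add hc) (fun x hx ↦ (inv_pos.2 hx).le)
      (fun x hx ↦ inv_nonneg.2 (add_nonneg (le_of_lt hx) hc))
      (antitoneOn_inv.monovaryOn antitoneOn_inv_add)
  refine (convexOn_product.smul hc).congr fun x hx ↦ ?_
  have hx₀ : x ≠ 0 := (mem_Ioi.1 hx).ne'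
  have hxc : x + c ≠ 0 := (add_pos_of_pos_of_nonneg hx hc).ne'
  simp only [Pi.mul_apply, smul_eq_mul]
  field_simp
  ring

end OrderedField

theorem strictConvexOn_inv_Ioi : StrictConvexOn ℝ (Ioi 0) (fun x : ℝ ↦ x⁻¹) := by
  simpa only [zpow_neg_one] using strictConvexOn_zpow (m := -1) (by norm_num) (by norm_num)

theorem strictConcaveOn_div_add_sub_div {a b c : ℝ} (hb : 0 < b) (hab : a < b) (hc : 0 ≤ c) :
    StrictConcaveOn ℝ (Ioi 0) (fun x ↦ a / (x + c) - b / x) := by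
  have strictConvexOn_main : StrictConvexOn ℝ (Ioi 0) (fun x : ℝ ↦ (b - a⁺) * x⁻¹) :=
    strictConvexOn_const_mul (sub_pos.2 (max_lt hab hb)) strictConvexOn_inv_Ioi
  have convexOn_pos_part : ConvexOn ℝ (Ioi 0) (fun x : ℝ ↦ a⁺ * (x⁻¹ - (x + c)⁻¹)) :=
    (convexOn_inv_sub_inv_add hc).smul (posPart_nonneg a)
  have convexOn_neg_part : ConvexOn ℝ (Ioi 0) (fun x : ℝ ↦ a⁻ * (x + c)⁻¹) :=
    (convexOn_inv_add hc).smul (negPart_nonneg a)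
  refine ((strictConvexOn_main.add_convexOn convexOn_pos_part).add_convexOn
    convexOn_neg_part).neg.congr fun x _ ↦ ?_
  simp only [Pi.neg_apply, Pi.add_apply]
  linear_combination (x + c)⁻¹ * posPart_sub_negPart a

theorem stmt13_general {p Tslot Ts A C : ℝ} (hp : p ≠ 0) (hTslot : 0 < Tslot) (hTs : Tslot ≤ Ts)
    (hC : 0 < C) (hA : A < C * Tslot) (l e₀ f₀ : ℝ) :
    StrictConcaveOn ℝ {w : ℝ | 0 < p * w + 1}
      (fun w : ℝ => A / (Tslot * (p * w + 1) + Ts - Tslot)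
        - l * (e₀ * w + f₀) - C / (p * w + 1)) := by
  let g : ℝ →ᵃ[ℝ] ℝ := (LinearMap.mulLeft ℝ p).toAffineMap + AffineMap.const ℝ ℝ 1
  have hg : Function.Injective g := fun x y hxy ↦
    mul_left_cancel₀ hp (add_right_cancel (b := (1 : ℝ)) hxy)
  have strictConcaveOn_fractions : StrictConcaveOn ℝ {w : ℝ | 0 < p * w + 1}
      (fun w ↦ A / Tslot / (p * w + 1 + (Ts - Tslot) / Tslot) - C / (p * w + 1)) :=
    strictConcaveOn_comp_affineMap
      (strictConcaveOn_div_add_sub_div hC ((div_lt_iff₀ hTslot).2 hA)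
        (div_nonneg (sub_nonneg.2 hTs) hTslot.le)) hg
  have convexOn_delay := convexOn_mul_add_const strictConcaveOn_fractions.1 (l * e₀) (l * f₀)
  refine (strictConcaveOn_fractions.sub_convexOn convexOn_delay).congr fun w _ ↦ ?_
  have denominator_eq : Tslot * (p * w + 1) + Ts - Tslot
      = Tslot * (p * w + 1 + (Ts - Tslot) / Tslot) := by
    field_simp
    ring
  rw [Pi.sub_apply, denominator_eq, div_div]
  ring

/-- The Adaptive Backoff utility
`V(w) = d·(1-p)·T_payload/(T_slot·(p·w+1) + T_s - T_slot) - l·(e₀·w + f₀) - p^(m+1)/(p·w+1)`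
is strictly concave on `[0, ∞)` whenever `d·(1-p)·T_payload < p^(m+1)·T_slot`. -/
theorem stmt13 (p Tslot Ts Tpayload : ℝ) (hp : p ∈ Set.Ioo (0 : ℝ) 1)
    (hTslot : 0 < Tslot) (hTs : Tslot ≤ Ts) (hTp : 0 < Tpayload)
    (m : ℕ) (d : ℝ) (hd : 0 ≤ d)
    (hsmall : d * (1 - p) * Tpayload < p ^ (m + 1) * Tslot) (l e₀ f₀ : ℝ) :
    StrictConcaveOn ℝ (Set.Ici (0 : ℝ))
      (fun w : ℝ => d * (1 - p) * Tpayload / (Tslot * (p * w + 1) + Ts - Tslot)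
        - l * (e₀ * w + f₀) - p ^ (m + 1) / (p * w + 1)) :=
  (stmt13_general hp.1.ne' hTslot hTs (pow_pos hp.1 (m + 1)) hsmall l e₀ f₀).subset
    (fun _ hw ↦ add_pos_of_nonneg_of_pos (mul_nonneg hp.1.le hw) one_pos) (convex_Ici 0)
end
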